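/- arXiv:1911.04546 — 2 statements merged into one kernel-verified Lean document; each statement's English description precedes it below -/
import Mathlib

section
/- Let G be a graph, let u be a vertex of G, and let v be a neighbor of u. Let D' be a path decomposition of G − uv. If the number of paths of D' ending at v is strictly greater than the number of neighbors w of u in G − uv with D'(w) = 0, then G admits a path decomposition D with |D| = |D'|, D(u) = D'(u) + 1, D(v) = D'(v) − 1, and D(x) = D'(x) for all other vertices x. -/
open SimpleGraph

variable {V : Type*}

/-- A path decomposition of a simple graph `G`: a list of nontrivial paths of `G`
that are pairwise edge-disjoint and together cover every edge of `G`. -/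
structure PathDecomp (G : SimpleGraph V) where
  paths : List (Σ a b : V, G.Walk a b)
  nontrivial : ∀ p ∈ paths, 0 < p.2.2.length
  isPath : ∀ p ∈ paths, p.2.2.IsPath
  edgeDisjoint : paths.Pairwise fun p q => ∀ e, e ∈ p.2.2.edges → e ∉ q.2.2.edges
  covers : ∀ e ∈ G.edgeSet, ∃ p ∈ paths, e ∈ p.2.2.edges

/-- Cardinality of a path decomposition. -/
def pdCard {G : SimpleGraph V} (D : PathDecomp G) : ℕ := D.paths.length

/-- `ends D u` is the number of paths in `D` having `u` as an end vertex. -/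
def ends [DecidableEq V] {G : SimpleGraph V} (D : PathDecomp G) (u : V) : ℕ :=
  (D.paths.filter fun p => p.1 = u ∨ p.2.1 = u).length

/-- The path number: minimum cardinality of a path decomposition. -/
noncomputable def pn (G : SimpleGraph V) : ℕ :=
  sInf {n | ∃ D : PathDecomp G, pdCard D = n}

/-- Degree as the `ncard` of the neighbor set (no decidability needed). -/
noncomputable def ndeg (G : SimpleGraph V) (v : V) : ℕ := {w | G.Adj v w}.ncard

/-- A SET graph: the set of even-degree vertices consists of exactly three
mutually adjacent vertices, and every odd-degree vertex has at least two
even-degree neighbors. -/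
def IsSETGraph (G : SimpleGraph V) : Prop :=
  (∃ a b c : V, a ≠ b ∧ a ≠ c ∧ b ≠ c ∧
      {v : V | Even (ndeg G v)} = {a, b, c} ∧
      G.Adj a b ∧ G.Adj a c ∧ G.Adj b c) ∧
  ∀ v : V, Odd (ndeg G v) →
    ∃ w₁ w₂ : V, w₁ ≠ w₂ ∧ G.Adj v w₁ ∧ G.Adj v w₂ ∧
      Even (ndeg G w₁) ∧ Even (ndeg G w₂)


/-!
Consider a family of edge-disjoint paths covering every edge at `u` except `ux`. If a path of the
family has end `x` and avoids `u`, extend it by `xu`. If a path `x … w u … c` has end `x` and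
passes through `u`, replacing its edge `wu` by `xu` turns it into a path `w … x u … c`: the missing
edge becomes `uw`, and one path end has moved from `x` to `w`. Call this an arc from `x` to `w`, and
follow arcs from `v` until reaching a vertex `y` that is an end of a path avoiding `u`; extending
that path by `yu` completes the decomposition, and in total one path end has moved from `v` to `u`.

Such a `y` exists. Otherwise every path end at a vertex of the set `X` reachable from `v` belongs to
a path through `u`, and it can be charged to the edge at `u` on its side of `u`, which leads
to a vertex of `X` and is different from `uv`. The charges are distinct, so the number of path ends
in `X` is at most the number of neighbours of `u` in `X \ {v}`. But each of these neighbours that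
is an end of some path accounts for an end by itself, so the ends at `v` are at most as many as
the neighbours that are ends of no path.
-/

theorem walk_append_inj_of_isPath {G : SimpleGraph V} {a u c : V} {p p' : G.Walk a u}
    {q q' : G.Walk u c}
    (hpq : (p.append q).IsPath) (h : p.append q = p'.append q') : p = p' ∧ q = q' := by
  have hpq' : (p'.append q').IsPath := h ▸ hpq
  induction p with
  | nil =>
    obtain rfl := (Walk.isPath_iff_nil.1 hpq'.of_append_left).eq_nil
    exact ⟨rfl, h⟩
  | cons hadj r ih =>
    cases p' with
    | nil => simpa using hpq.of_append_left
    | cons hadj' r' =>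
      simp only [Walk.cons_append, Walk.cons.injEq] at h
      obtain ⟨rfl, hr⟩ := h
      obtain ⟨rfl, rfl⟩ := ih hpq.of_cons (eq_of_heq hr) hpq'.of_cons
      exact ⟨rfl, rfl⟩


open scoped Classical in
theorem countP_mem_image_eq_ncard {α β : Type*} {s : Multiset β} (hs : s.Nodup) {f : α → β}
    (hf : f.Injective) (X : Set α) :
    s.countP (· ∈ f '' X) = (X ∩ f ⁻¹' {b | b ∈ s}).ncard := by
  rw [← Set.ncard_image_of_injective _ hf, Set.image_inter_preimage, Multiset.countP_eq_card_filter,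
    ← Multiset.toFinset_card_of_nodup (hs.filter _), ← Set.ncard_coe_finset]
  congr 1
  ext b
  simp [and_comm]

theorem count_add_ncard_le_countP {α : Type*} [DecidableEq α] {s : Multiset α} {v : α}
    {X R : Set α} [DecidablePred (· ∈ X)]
    (hv : v ∈ X) (hR : R ⊆ X) (hvR : v ∉ R) (hRs : ∀ w ∈ R, w ∈ s) :
    s.count v + R.ncard ≤ s.countP (· ∈ X) := by
  have hsub : R ⊆ ((s.filter (· ≠ v)).filter (· ∈ X)).toFinset := fun w hw => by
    simpa [hRs w hw, hR hw] using ne_of_mem_of_not_mem hw hvR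
  calc
    s.count v + R.ncard ≤
        (s.filter (· = v)).countP (· ∈ X) + (s.filter (· ≠ v)).countP (· ∈ X) := by
      refine add_le_add ?_ ?_
      · rw [Multiset.filter_eq', Multiset.countP_eq_card.2 fun w hw =>
          Multiset.eq_of_mem_replicate hw ▸ hv, Multiset.card_replicate]
      · rw [Multiset.countP_eq_card_filter]
        exact (Set.ncard_le_ncard hsub).trans
          ((Set.ncard_coe_finset _).trans_le (Multiset.toFinset_card_le _))
    _ = s.countP (· ∈ X) := by rw [← Multiset.countP_add, Multiset.filter_add_not]

/-- A finite family of walks of `G` with arbitrary ends. Unlike in `PathDecomp`, the family is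
unordered, and it may leave edges of `G` uncovered: this is what happens while edges are being
exchanged. -/
abbrev WalkFamily (G : SimpleGraph V) := Multiset (Σ a b : V, G.Walk a b)

namespace WalkFamily

variable {G : SimpleGraph V} {P : WalkFamily G} {a b c d u v w x y : V}
  {p : G.Walk a b} {q : G.Walk c d}

section Basic

/-- The edges of a family of walks, counted with multiplicity. -/
def edges (P : WalkFamily G) : Multiset (Sym2 V) :=
  P.bind fun p => (p.2.2.edges : Multiset (Sym2 V))

/-- The ends of a family of walks, counted with multiplicity; a closed walk counts twice. -/
def endpoints (P : WalkFamily G) : Multiset V :=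
  P.bind fun p => {p.1, p.2.1}

/-- All walks of the family are nontrivial paths. -/
def ArePaths (P : WalkFamily G) : Prop :=
  ∀ p ∈ P, p.2.2.IsPath ∧ ¬ p.2.2.Nil

/-- The family contains the walk `p` up to reversal. -/
def Contains (P : WalkFamily G) (p : G.Walk a b) : Prop :=
  ⟨a, b, p⟩ ∈ P ∨ ⟨b, a, p.reverse⟩ ∈ P

@[simp]
theorem edges_cons (p : Σ a b : V, G.Walk a b) (P : WalkFamily G) :
    edges (p ::ₘ P) = p.2.2.edges + P.edges :=
  Multiset.cons_bind ..

@[simp]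
theorem endpoints_cons (p : Σ a b : V, G.Walk a b) (P : WalkFamily G) :
    endpoints (p ::ₘ P) = {p.1, p.2.1} + P.endpoints :=
  Multiset.cons_bind ..

theorem edges_coe (l : List (Σ a b : V, G.Walk a b)) :
    edges (l : Multiset (Σ a b : V, G.Walk a b)) = (l.flatMap fun p => p.2.2.edges :) :=
  Multiset.coe_bind ..

theorem mem_edges {e : Sym2 V} : e ∈ P.edges ↔ ∃ p ∈ P, e ∈ p.2.2.edges := by
  simp [edges]

theorem contains_reverse : P.Contains p.reverse ↔ P.Contains p := by
  simp [Contains, or_comm]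

theorem Contains.mem_edges (h : P.Contains p) {e : Sym2 V} (he : e ∈ p.edges) :
    e ∈ P.edges := by
  rcases h with h | h
  · exact WalkFamily.mem_edges.2 ⟨_, h, he⟩
  · exact WalkFamily.mem_edges.2 ⟨_, h, by simpa using he⟩

theorem ArePaths.isPath (hP : P.ArePaths) (h : P.Contains p) : p.IsPath :=
  h.elim (fun h => (hP _ h).1) fun h => (Walk.isPath_reverse_iff p).1 (hP _ h).1

end Basic

section Replace

open scoped Classical in
/-- The family obtained from `P` by substituting the walk `q` for the walk `p`, or for its reversal
if `P` contains only the latter. It is meaningful when `P.Contains p`. -/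
noncomputable def replace (P : WalkFamily G) (p : G.Walk a b) (q : G.Walk c d) : WalkFamily G :=
  ⟨c, d, q⟩ ::ₘ if ⟨a, b, p⟩ ∈ P then P.erase ⟨a, b, p⟩ else P.erase ⟨b, a, p.reverse⟩

theorem Contains.exists_replace_eq_cons (h : P.Contains p) (q : G.Walk c d) :
    ∃ P₀ : WalkFamily G, P.replace p q = ⟨c, d, q⟩ ::ₘ P₀ ∧
      (P = ⟨a, b, p⟩ ::ₘ P₀ ∨ P = ⟨b, a, p.reverse⟩ ::ₘ P₀) := by
  classical
  by_cases hp : ⟨a, b, p⟩ ∈ P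
  · exact ⟨_, by rw [replace, if_pos hp], .inl (Multiset.cons_erase hp).symm⟩
  · exact ⟨_, by rw [replace, if_neg hp], .inr (Multiset.cons_erase (h.resolve_left hp)).symm⟩

theorem card_replace (h : P.Contains p) : (P.replace p q).card = P.card := by
  obtain ⟨P₀, hQ, rfl | rfl⟩ := h.exists_replace_eq_cons q <;> simp [hQ]

theorem edges_replace (h : P.Contains p) :
    (P.replace p q).edges + p.edges = P.edges + q.edges := by
  obtain ⟨P₀, hQ, rfl | rfl⟩ := h.exists_replace_eq_cons q <;>
  · simp only [hQ, edges_cons, Walk.edges_reverse, Multiset.coe_reverse]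
    abel

theorem endpoints_replace (h : P.Contains p) :
    (P.replace p q).endpoints + {a, b} = P.endpoints + {c, d} := by
  obtain ⟨P₀, hQ, rfl | rfl⟩ := h.exists_replace_eq_cons q <;>
  · simp only [hQ, endpoints_cons, Multiset.pair_comm b a]
    abel

theorem cons_endpoints_replace {q : G.Walk c b} (h : P.Contains p) :
    a ::ₘ (P.replace p q).endpoints = c ::ₘ P.endpoints := by
  have h := endpoints_replace (q := q) h
  rw [Multiset.insert_eq_cons, Multiset.insert_eq_cons, Multiset.add_cons, Multiset.add_cons,
    ← Multiset.cons_add, ← Multiset.cons_add] at h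
  exact add_right_cancel h

theorem ArePaths.replace (hP : P.ArePaths) (h : P.Contains p) (hq : q.IsPath) (hq' : ¬ q.Nil) :
    (P.replace p q).ArePaths := by
  obtain ⟨P₀, hQ, rfl | rfl⟩ := h.exists_replace_eq_cons q <;>
  · rw [hQ]
    exact Multiset.forall_mem_cons.2 ⟨⟨hq, hq'⟩, (Multiset.forall_mem_cons.1 hP).2⟩

theorem contains_replace_self (P : WalkFamily G) (p : G.Walk a b) (q : G.Walk c d) :
    (P.replace p q).Contains q :=
  .inl (Multiset.mem_cons_self _ _)

theorem sigma_reverse_eq_iff :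
    (⟨b, a, p.reverse⟩ : Σ a b : V, G.Walk a b) = ⟨c, d, q⟩ ↔
      (⟨a, b, p⟩ : Σ a b : V, G.Walk a b) = ⟨d, c, q.reverse⟩ := by
  constructor
  · rintro ⟨⟩
    rw [Walk.reverse_reverse]
  · rintro ⟨⟩
    rw [Walk.reverse_reverse]

theorem Contains.replace_or_eq {a' b' : V} {r : G.Walk a' b'} (hr : P.Contains r)
    (h : P.Contains p) (q : G.Walk c d) :
    (P.replace p q).Contains r ∨ (⟨a', b', r⟩ : Σ a b : V, G.Walk a b) = ⟨a, b, p⟩ ∨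
      (⟨a', b', r⟩ : Σ a b : V, G.Walk a b) = ⟨b, a, p.reverse⟩ := by
  obtain ⟨P₀, hQ, rfl | rfl⟩ := h.exists_replace_eq_cons q <;>
  · simp only [Contains, hQ, Multiset.mem_cons, sigma_reverse_eq_iff, Walk.reverse_reverse] at hr ⊢
    tauto

end Replace

section Arms

/-- Some path of the family passes through the start `u` of `p` and ends with `p`. Such a path
consists of two arms issuing from `u`, the second of which may be trivial. -/
def HasArm (P : WalkFamily G) (p : G.Walk u a) : Prop :=
  ∃ (c : V) (q : G.Walk u c), P.Contains (p.reverse.append q)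

/-- Some path of the family with end `a` passes through `u`, and `b` is the vertex preceding `u`
on the way from `a`. -/
def Arc (P : WalkFamily G) (u a b : V) : Prop :=
  ∃ (h : G.Adj u b) (r : G.Walk b a), P.HasArm (.cons h r)

/-- Some path of the family has end `a` and avoids `u`. -/
def HasPathAvoiding (P : WalkFamily G) (u a : V) : Prop :=
  ∃ (c : V) (p : G.Walk a c), P.Contains p ∧ u ∉ p.support

theorem Arc.adj (h : P.Arc u a b) : G.Adj u b := h.1

theorem Arc.mem_edges (h : P.Arc u a b) : s(u, b) ∈ P.edges := by
  obtain ⟨_, r, c, q, hpq⟩ := h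
  exact hpq.mem_edges (by simp)

theorem hasArm_of_contains {p : G.Walk u a} {q : G.Walk u c} (h : P.Contains (p.reverse.append q)) :
    P.HasArm p ∧ P.HasArm q := by
  refine ⟨⟨c, q, h⟩, a, p, ?_⟩
  rwa [← contains_reverse, Walk.reverse_append, Walk.reverse_reverse]

theorem HasArm.replace (hP : P.ArePaths) {p : G.Walk u x} {q : G.Walk u c}
    (hpq : P.Contains (p.reverse.append q)) (p₁ : G.Walk u w) (hax : a ≠ x) {r : G.Walk u a}
    (hr : P.HasArm r) :
    (P.replace (p.reverse.append q) (p₁.reverse.append q)).HasArm r := by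
  obtain ⟨d, t, hrt⟩ := hr
  rcases hrt.replace_or_eq hpq (p₁.reverse.append q) with h | h | h
  · exact ⟨d, t, h⟩
  · exact absurd (congrArg Sigma.fst h) hax
  · rw [Walk.reverse_append, Walk.reverse_reverse] at h
    obtain rfl : a = c := congrArg Sigma.fst h
    obtain rfl : d = x := congrArg (·.2.1) h
    obtain ⟨hrq, rfl⟩ := walk_append_inj_of_isPath (hP.isPath hrt) (by simpa using h)
    obtain rfl := Walk.reverse_injective hrq
    exact (hasArm_of_contains (contains_replace_self ..)).2

theorem HasPathAvoiding.replace {p : G.Walk x u} {q : G.Walk u c}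
    (hpq : P.Contains (p.append q)) (r : G.Walk b d) (h : P.HasPathAvoiding u a) :
    (P.replace (p.append q) r).HasPathAvoiding u a := by
  obtain ⟨a', t, ht, hu⟩ := h
  rcases ht.replace_or_eq hpq r with h | h | h
  · exact ⟨a', t, h, hu⟩
  · cases h
    simp at hu
  · cases h
    simp at hu

end Arms

section Addible

/-- The edge `ux` can be added to the family, turning one path end at `x` into a path end at `u`
and keeping the number of paths. -/
def Addible (P : WalkFamily G) (u x : V) : Prop :=
  ∃ Q : WalkFamily G, Q.ArePaths ∧ Q.card = P.card ∧ Q.edges = s(u, x) ::ₘ P.edges ∧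
    x ::ₘ Q.endpoints = u ::ₘ P.endpoints

theorem HasPathAvoiding.addible (h : P.HasPathAvoiding u x) (hP : P.ArePaths) (hux : G.Adj u x) :
    P.Addible u x := by
  obtain ⟨c, p, hp, hu⟩ := h
  refine ⟨P.replace p (.cons hux p), hP.replace hp ?_ (by simp), card_replace hp, ?_,
    cons_endpoints_replace hp⟩
  · exact (Walk.cons_isPath_iff _ _).2 ⟨hP.isPath hp, hu⟩
  · have h := edges_replace (q := .cons hux p) hp
    rw [Walk.edges_cons, ← Multiset.cons_coe, Multiset.add_cons, ← Multiset.cons_add] at h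
    exact add_right_cancel h

/-- The swap: the path `x … w u … c` becomes `w … x u … c`. -/
theorem Arc.exists_swap (h : P.Arc u x w) (hP : P.ArePaths) (hux : G.Adj u x) :
    ∃ Q : WalkFamily G, Q.ArePaths ∧ Q.card = P.card ∧
      s(u, w) ::ₘ Q.edges = s(u, x) ::ₘ P.edges ∧ x ::ₘ Q.endpoints = w ::ₘ P.endpoints ∧
      (∀ a b, a ≠ x → P.Arc u a b → Q.Arc u a b) ∧
      ∀ a, P.HasPathAvoiding u a → Q.HasPathAvoiding u a := by
  obtain ⟨huw, r, c, q, hpq⟩ := h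
  let old := (Walk.cons huw r).reverse.append q
  let new := (Walk.cons hux r.reverse).reverse.append q
  have hold : (old.edges : Multiset (Sym2 V)) = s(u, w) ::ₘ (r.edges + q.edges) := by
    simp [old, ← Multiset.coe_add, ← Multiset.cons_coe, Sym2.eq_swap (a := w)]
  have hnew : (new.edges : Multiset (Sym2 V)) = s(u, x) ::ₘ (r.edges + q.edges) := by
    simp [new, ← Multiset.coe_add, ← Multiset.cons_coe, Sym2.eq_swap (a := x)]
  have hperm : old.support.Perm new.support := by
    simpa [old, new, Walk.support_append] using (List.reverse_perm _).append_right _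
  have hpath : new.IsPath := by
    rw [Walk.isPath_def, ← hperm.nodup_iff]
    exact (hP.isPath hpq).support_nodup
  refine ⟨P.replace old new, hP.replace hpq hpath (by simp [new]), card_replace hpq, ?_,
    cons_endpoints_replace hpq, fun a b hax ⟨hub, s, hs⟩ => ⟨hub, s, hs.replace hP hpq _ hax⟩,
    fun a ha => ha.replace hpq _⟩
  have h := edges_replace (q := new) hpq
  rw [hold, hnew, Multiset.add_cons, Multiset.add_cons, ← Multiset.cons_add,
    ← Multiset.cons_add] at h
  exact add_right_cancel h

/-- The arcs change with the family, so `R` stands for the arcs of the family with which the chain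
of swaps was started. The swap at `x` preserves all of them except those at `x` itself. -/
theorem addible_of_reflTransGen {R : V → V → Prop} (hxy : Relation.ReflTransGen R x y) :
    ∀ {P : WalkFamily G}, P.ArePaths → G.Adj u x → (s(u, x) ::ₘ P.edges).Nodup →
      (∀ a b, Relation.ReflTransGen R x a → R a b → P.Arc u a b) → P.HasPathAvoiding u y →
      P.Addible u x := by
  induction hxy using Relation.ReflTransGen.head_induction_on with
  | refl => exact fun hP hux _ _ hy => hy.addible hP hux
  | @head x w hxw _ ih =>
    intro P hP hux hnd hR hy
    have hxw' := hR x w .refl hxw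
    obtain ⟨Q, hQ, hcard, hedges, hends, harc, havoid⟩ := hxw'.exists_swap hP hux
    have hx : ∀ a, Relation.ReflTransGen R w a → a ≠ x := by
      rintro a hwa rfl
      obtain ⟨b, hab, hba⟩ := Relation.TransGen.tail'_iff.1 (Relation.TransGen.head' hxw hwa)
      exact (Multiset.nodup_cons.1 hnd).1 (hR b a hab hba).mem_edges
    obtain ⟨Q', hQ', hcard', hedges', hends'⟩ := ih hQ hxw'.adj (hedges ▸ hnd)
      (fun a b hwa hab => harc a b (hx a hwa) (hR a b (.head hxw hwa) hab)) (havoid y hy)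
    refine ⟨Q', hQ', hcard'.trans hcard, hedges'.trans hedges, (Multiset.cons_inj_right w).1 ?_⟩
    rw [Multiset.cons_swap, hends', Multiset.cons_swap, hends, Multiset.cons_swap]

end Addible

section Counting

open scoped Classical in
theorem HasArm.countP_le {X : Set V} (hu : u ∉ X) (hX : ∀ a ∈ X, ∀ b, P.Arc u a b → b ∈ X)
    {p : G.Walk u a} (hp : P.HasArm p) :
    Multiset.countP (· ∈ X) {a} ≤ Multiset.countP (· ∈ (s(u, ·)) '' X) (p.edges : Multiset _) := by
  by_cases ha : a ∈ X
  · cases p with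
    | nil => exact absurd ha hu
    | cons h r =>
      have hb := hX a ha _ ⟨h, r, hp⟩
      rw [← Multiset.cons_zero, Multiset.countP_cons_of_pos _ ha]
      exact Multiset.countP_pos_of_mem (by simp) (Set.mem_image_of_mem _ hb)
  · rw [← Multiset.cons_zero, Multiset.countP_cons_of_neg _ ha]
    exact Nat.zero_le _

open scoped Classical in
theorem Contains.countP_le {X : Set V} (hu : u ∉ X) (hX : ∀ a ∈ X, ∀ b, P.Arc u a b → b ∈ X)
    (havoid : ∀ a ∈ X, ¬ P.HasPathAvoiding u a) (hp : P.Contains p) :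
    Multiset.countP (· ∈ X) {a, b} ≤
      Multiset.countP (· ∈ (s(u, ·)) '' X) (p.edges : Multiset _) := by
  by_cases hup : u ∈ p.support
  · obtain ⟨q, r, rfl⟩ := Walk.mem_support_iff_exists_append.1 hup
    rw [← q.reverse_reverse] at hp
    obtain ⟨hq, hr⟩ := hasArm_of_contains hp
    calc
      _ = Multiset.countP (· ∈ X) {a} + Multiset.countP (· ∈ X) {b} := by
        rw [← Multiset.countP_add]
        rfl
      _ ≤ _ := add_le_add (hq.countP_le hu hX) (hr.countP_le hu hX)
      _ = _ := by
        rw [Walk.edges_reverse, Multiset.coe_reverse, Walk.edges_append, ← Multiset.coe_add,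
          Multiset.countP_add]
  · have ha : a ∉ X := fun ha => havoid a ha ⟨b, p, hp, hup⟩
    have hb : b ∉ X := fun hb => havoid b hb ⟨a, p.reverse, contains_reverse.2 hp, by simpa⟩
    rw [Multiset.countP_eq_zero.2 (by simp [ha, hb])]
    exact Nat.zero_le _

open scoped Classical in
theorem countP_endpoints_le {X : Set V} (hu : u ∉ X)
    (hX : ∀ a ∈ X, ∀ b, P.Arc u a b → b ∈ X) (havoid : ∀ a ∈ X, ¬ P.HasPathAvoiding u a) :
    P.endpoints.countP (· ∈ X) ≤ P.edges.countP (· ∈ (s(u, ·)) '' X) := by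
  simp only [endpoints, edges, Multiset.countP_eq_card_filter, Multiset.filter_bind,
    Multiset.card_bind, Function.comp_def]
  simp only [← Multiset.countP_eq_card_filter]
  exact Multiset.sum_map_le_sum_map _ _ fun p hp =>
    Contains.countP_le (p := p.2.2) hu hX havoid (.inl hp)

theorem exists_hasPathAvoiding [DecidableEq V] (huv : u ≠ v) (hnd : (s(u, v) ::ₘ P.edges).Nodup)
    (h : {w | s(u, w) ∈ P.edges ∧ P.endpoints.count w = 0}.ncard < P.endpoints.count v) :
    ∃ y, Relation.ReflTransGen (P.Arc u) v y ∧ P.HasPathAvoiding u y := by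
  classical
  by_contra! havoid
  obtain ⟨hv, hnd⟩ := Multiset.nodup_cons.1 hnd
  have hinj : (s(u, ·)).Injective := fun _ _ => Sym2.congr_right.1
  let X := {x | Relation.ReflTransGen (P.Arc u) v x}
  let N := {w | s(u, w) ∈ P.edges}
  have hN : N.Finite := P.edges.finite_toSet.preimage hinj.injOn
  let N₀ := {w | P.endpoints.count w = 0}
  have hu : u ∉ X := fun hu => by
    rcases Relation.ReflTransGen.cases_tail hu with rfl | ⟨_, _, ha⟩
    · exact huv rfl
    · exact ha.adj.ne rfl
  have hle : P.endpoints.count v + ((X ∩ N) \ N₀).ncard ≤ (X ∩ N).ncard := calc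
    _ ≤ P.endpoints.countP (· ∈ X) :=
      count_add_ncard_le_countP .refl (fun _ h => h.1.1) (fun h => hv h.1.2) fun w hw =>
        by_contra fun h => hw.2 (Multiset.count_eq_zero.2 h)
    _ ≤ P.edges.countP (· ∈ (s(u, ·)) '' X) := countP_endpoints_le hu (fun _ ha _ => ha.tail) havoid
    _ = (X ∩ N).ncard := countP_mem_image_eq_ncard hnd hinj X
  have hN₀ : ((X ∩ N) ∩ N₀).ncard ≤ (N ∩ N₀).ncard :=
    Set.ncard_le_ncard (fun w hw => ⟨hw.1.2, hw.2⟩) (hN.inter_of_left _)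
  have hsplit := Set.ncard_inter_add_ncard_sdiff_eq_ncard (X ∩ N) N₀ (hN.inter_of_right _)
  have h' : (N ∩ N₀).ncard < P.endpoints.count v := h
  omega

theorem addible_of_ncard_lt_count [DecidableEq V] (hP : P.ArePaths) (huv : G.Adj u v)
    (hnd : (s(u, v) ::ₘ P.edges).Nodup)
    (h : {w | s(u, w) ∈ P.edges ∧ P.endpoints.count w = 0}.ncard < P.endpoints.count v) :
    P.Addible u v := by
  obtain ⟨y, hvy, hy⟩ := exists_hasPathAvoiding huv.ne hnd h
  exact addible_of_reflTransGen hvy hP huv hnd (fun _ _ _ => id) hy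

end Counting

end WalkFamily

namespace PathDecomp

variable {G H : SimpleGraph V}

/-- The paths of a decomposition of a subgraph `H` of `G`, as walks of `G`. -/
def toWalkFamily (D : PathDecomp H) (hHG : H ≤ G) : WalkFamily G :=
  (D.paths : Multiset (Σ a b : V, H.Walk a b)).map fun p => ⟨p.1, p.2.1, p.2.2.mapLe hHG⟩

theorem card_toWalkFamily (D : PathDecomp H) (hHG : H ≤ G) :
    (D.toWalkFamily hHG).card = pdCard D := by
  simp [toWalkFamily, pdCard]

theorem edges_toWalkFamily (D : PathDecomp H) (hHG : H ≤ G) :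
    (D.toWalkFamily hHG).edges = (D.paths.flatMap fun p => p.2.2.edges :) := by
  rw [toWalkFamily, Multiset.map_coe, WalkFamily.edges_coe, List.flatMap_map]
  simp only [Walk.edges_mapLe_eq_edges]

theorem mem_edges_toWalkFamily (D : PathDecomp H) (hHG : H ≤ G) {e : Sym2 V} :
    e ∈ (D.toWalkFamily hHG).edges ↔ e ∈ H.edgeSet := by
  rw [edges_toWalkFamily, Multiset.mem_coe, List.mem_flatMap]
  exact ⟨fun ⟨p, _, he⟩ => p.2.2.edges_subset_edgeSet he, D.covers e⟩

theorem nodup_edges_toWalkFamily (D : PathDecomp H) (hHG : H ≤ G) :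
    (D.toWalkFamily hHG).edges.Nodup := by
  rw [edges_toWalkFamily, Multiset.coe_nodup, List.nodup_flatMap]
  exact ⟨fun p hp => (D.isPath p hp).isTrail.edges_nodup,
    D.edgeDisjoint.imp fun h => List.disjoint_left.2 fun {e} => h e⟩

theorem arePaths_toWalkFamily (D : PathDecomp H) (hHG : H ≤ G) :
    (D.toWalkFamily hHG).ArePaths := by
  simp only [WalkFamily.ArePaths, toWalkFamily, Multiset.mem_map, Multiset.mem_coe]
  rintro _ ⟨p, hp, rfl⟩
  refine ⟨(D.isPath p hp).mapLe hHG, ?_⟩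
  rw [← Walk.length_eq_zero_iff, Walk.length_mapLe]
  exact (D.nontrivial p hp).ne'

theorem count_endpoints_toWalkFamily [DecidableEq V] (D : PathDecomp H) (hHG : H ≤ G) (x : V) :
    (D.toWalkFamily hHG).endpoints.count x = ends D x := by
  have hcount (p) (hp : p ∈ D.paths) :
      Multiset.count x {p.1, p.2.1} = if p.1 = x ∨ p.2.1 = x then 1 else 0 := by
    have hne : p.1 ≠ p.2.1 := mt (D.isPath p hp).nil_iff_eq.2
      (mt Walk.length_eq_zero_iff.2 (D.nontrivial p hp).ne')
    simp only [Multiset.insert_eq_cons, Multiset.count_cons, Multiset.count_singleton]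
    grind
  rw [toWalkFamily, WalkFamily.endpoints, Multiset.bind_map, Multiset.count_bind,
    Multiset.map_congr rfl hcount]
  simp [ends, List.sum_map_ite]

end PathDecomp

theorem WalkFamily.ArePaths.exists_toWalkFamily_eq {G : SimpleGraph V} {P : WalkFamily G}
    (hP : P.ArePaths) (hnd : P.edges.Nodup) (hcov : ∀ e ∈ G.edgeSet, e ∈ P.edges) :
    ∃ D : PathDecomp G, D.toWalkFamily le_rfl = P := by
  obtain ⟨l, rfl⟩ := Quot.exists_rep P
  replace hnd : (l.flatMap fun p => p.2.2.edges).Nodup := by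
    rwa [← Multiset.coe_nodup, ← WalkFamily.edges_coe]
  refine ⟨⟨l, fun p hp => ?_, fun p hp => (hP p hp).1, ?_, fun e he => ?_⟩, ?_⟩
  · exact Nat.pos_of_ne_zero fun h => (hP p hp).2 (Walk.length_eq_zero_iff.1 h)
  · exact (List.nodup_flatMap.1 hnd).2.imp fun h e he => List.disjoint_left.1 h he
  · exact WalkFamily.mem_edges.1 (hcov e he)
  · refine (Multiset.map_congr rfl fun p _ => ?_).trans (Multiset.map_id _)
    exact congrArg (fun q => (⟨p.1, p.2.1, q⟩ : Σ a b : V, G.Walk a b)) p.2.2.map_id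

theorem fan_addible_lemma [DecidableEq V] (G : SimpleGraph V) (u v : V)
    (huv : G.Adj u v)
    (D' : PathDecomp (G.deleteEdges {s(u, v)}))
    (h : {w | (G.deleteEdges {s(u, v)}).Adj u w ∧ ends D' w = 0}.ncard < ends D' v) :
    ∃ D : PathDecomp G, pdCard D = pdCard D' ∧
      ends D u = ends D' u + 1 ∧ ends D v + 1 = ends D' v ∧
      ∀ x, x ≠ u → x ≠ v → ends D x = ends D' x := by
  let P : WalkFamily G := D'.toWalkFamily (G.deleteEdges_le _)
  have hnd : (s(u, v) ::ₘ P.edges).Nodup :=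
    Multiset.nodup_cons.2 ⟨by simp [P, D'.mem_edges_toWalkFamily], D'.nodup_edges_toWalkFamily _⟩
  simp only [← mem_edgeSet, ← D'.mem_edges_toWalkFamily (G.deleteEdges_le _),
    ← D'.count_endpoints_toWalkFamily (G.deleteEdges_le _)] at h
  obtain ⟨Q, hQ, hcard, hedges, hends⟩ :=
    WalkFamily.addible_of_ncard_lt_count (D'.arePaths_toWalkFamily _) huv hnd h
  obtain ⟨D, rfl⟩ := hQ.exists_toWalkFamily_eq (hedges ▸ hnd) fun e he => by
    rw [hedges, Multiset.mem_cons, D'.mem_edges_toWalkFamily, edgeSet_deleteEdges]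
    exact or_iff_not_imp_left.2 fun hne => ⟨he, hne⟩
  have hcount (x : V) : ends D x + (if x = v then 1 else 0) =
      ends D' x + (if x = u then 1 else 0) := by
    simpa only [Multiset.count_cons, PathDecomp.count_endpoints_toWalkFamily, P] using
      congrArg (Multiset.count x) hends
  refine ⟨D, ?_, ?_, ?_, fun x hxu hxv => ?_⟩
  · simpa only [PathDecomp.card_toWalkFamily, P] using hcard
  · simpa [huv.ne] using hcount u
  · simpa [huv.ne'] using hcount v
  · simpa [hxu, hxv] using hcount x
end

section
/- Let G be a graph and M = {u_1v_1, …, u_kv_k} an induced matching in G, and let D' be a path decomposition of G' = G \ M. If for each i the vertex u_i has no neighbor w in G' with D'(w) = 0 and D'(v_i) ≥ 1, then G admits a path decomposition D with |D| = |D'|, D(u_i) = D'(u_i)+1 and D(v_i) = D'(v_i)−1 for each i, and D(w) = D'(w) for every vertex w not incident to M. -/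
open SimpleGraph

variable {V : Type*}

/-!
Let `ab` be an edge to be added to a decomposition in which `b` and all neighbours of `a` are ends
of paths. If some path ending at `b` avoids `a`, prolong it by `ab`. Otherwise that path runs
`b … y a …`; replacing `ya` by `ab` reverses its leg `b … y`, so `y` takes over the role of `b` as
an end and `ya` that of the missing edge. Iterating never returns to a vertex already treated,
since an edge at `a` is the last edge of at most one leg into `a`; hence the process stops with
`b` replaced by `a` as an end. The edges of the matching are added one after the other: no `uᵢ` is
adjacent to another `vⱼ`, so the ends used up at the `vⱼ` are not needed at the `uᵢ`.
-/

/-- The edges between consecutive entries of a list of vertices. Paths are handled as vertex lists,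
since walks carry their ends and their graph in their type, and both change under the surgery. -/
def pathEdges (l : List V) : List (Sym2 V) := List.zipWith (s(·, ·)) l l.tail

/-- The first and the last entry of a list of vertices, as the two ends of a path; a list with a
single entry counts it twice. -/
def pathEnds (l : List V) : Multiset V := ↑(l.head?.toList ++ l.getLast?.toList)

/-- All edges of a family of vertex lists, with multiplicity. -/
def familyEdges (D : Multiset (List V)) : Multiset (Sym2 V) := D.bind fun l => ↑(pathEdges l)

/-- All ends of a family of vertex lists, with multiplicity. -/
def familyEnds (D : Multiset (List V)) : Multiset V := D.bind pathEnds

/-- `D` consists of `n` nontrivial paths, whose edges are `E` and whose ends are `T`, both counted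
with multiplicity; the paths are edge-disjoint exactly if `E.Nodup`. -/
structure IsPathFamily (D : Multiset (List V)) (n : ℕ) (E : Multiset (Sym2 V)) (T : Multiset V) :
    Prop where
  isPath : ∀ l ∈ D, l.Nodup ∧ 2 ≤ l.length
  card_eq : D.card = n
  edges_eq : familyEdges D = E
  ends_eq : familyEnds D = T

/-- `l` is a path of the family `D`, followed in one of its two directions. -/
def IsTraversal (D : Multiset (List V)) (l : List V) : Prop := l ∈ D ∨ l.reverse ∈ D

/-- Some path of the family, followed from its end `z`, either avoids `a` or enters `a` from a
vertex of `U`. This is the invariant of the chain of leg reversals, `U` being the set of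
neighbours of `a` not yet treated. -/
def HasLegVia (D : Multiset (List V)) (a : V) (U : Set V) (z : V) : Prop :=
  ∃ l, IsTraversal D l ∧ l.head? = some z ∧
    ∀ r s, l = r ++ a :: s → ∃ y ∈ U, r.getLast? = some y

theorem pathEdges_cons_cons (a b : V) (l : List V) :
    pathEdges (a :: b :: l) = s(a, b) :: pathEdges (b :: l) :=
  rfl

theorem pathEdges_append_cons {r : List V} {y : V} (hr : r.getLast? = some y) (a : V)
    (s : List V) : pathEdges (r ++ a :: s) = pathEdges r ++ s(a, y) :: pathEdges (a :: s) := by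
  induction r with
  | nil => simp at hr
  | cons x r ih =>
    cases r with
    | nil =>
      obtain rfl : x = y := by simpa using hr
      simp [pathEdges, Sym2.eq_swap]
    | cons x' r => simp_all [pathEdges_cons_cons]

theorem pathEdges_reverse (l : List V) : pathEdges l.reverse = (pathEdges l).reverse := by
  induction l with
  | nil => rfl
  | cons x l ih =>
    cases l with
    | nil => rfl
    | cons y l =>
      rw [List.reverse_cons, pathEdges_append_cons (y := y) (by simp), ih, pathEdges_cons_cons,
        List.reverse_cons]
      rfl

theorem not_isDiag_of_mem_pathEdges {l : List V} (hl : l.Nodup) {e : Sym2 V}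
    (he : e ∈ pathEdges l) : ¬e.IsDiag := by
  induction l with
  | nil => simp [pathEdges] at he
  | cons x l ih =>
    cases l with
    | nil => simp [pathEdges] at he
    | cons y l =>
      rcases List.mem_cons.1 he with rfl | he
      · simpa using fun h : x = y => (List.nodup_cons.1 hl).1 (by simp [h])
      · exact ih hl.of_cons he

theorem isChain_of_pathEdges_subset {G : SimpleGraph V} {l : List V}
    (h : ∀ e ∈ pathEdges l, e ∈ G.edgeSet) : l.IsChain G.Adj := by
  induction l with
  | nil => simp
  | cons x l ih => cases l <;> simp_all [pathEdges_cons_cons]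

theorem pathEdges_support {G : SimpleGraph V} {a b : V} (p : G.Walk a b) :
    pathEdges p.support = p.edges :=
  Walk.edges_eq_zipWith_support.symm

theorem pathEnds_reverse (l : List V) : pathEnds l.reverse = pathEnds l := by
  simp [pathEnds, ← Multiset.coe_add, add_comm]

theorem pathEnds_append_cons {r : List V} {x : V} (hr : r.head? = some x) (a : V) (s : List V) :
    pathEnds (r ++ a :: s) = x ::ₘ ↑(a :: s).getLast?.toList := by
  rw [pathEnds, List.head?_append, hr, List.getLast?_append_cons]
  rfl

theorem pathEnds_support {G : SimpleGraph V} {a b : V} (p : G.Walk a b) :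
    pathEnds p.support = {a, b} := by
  rw [pathEnds, List.head?_eq_some_head p.support_ne_nil,
    List.getLast?_eq_some_getLast p.support_ne_nil, p.head_support, p.getLast_support]
  rfl

theorem familyEdges_cons (l : List V) (D : Multiset (List V)) :
    familyEdges (l ::ₘ D) = ↑(pathEdges l) + familyEdges D :=
  Multiset.cons_bind ..

theorem familyEnds_cons (l : List V) (D : Multiset (List V)) :
    familyEnds (l ::ₘ D) = pathEnds l + familyEnds D :=
  Multiset.cons_bind ..

theorem mem_familyEdges {D : Multiset (List V)} {e : Sym2 V} :
    e ∈ familyEdges D ↔ ∃ l ∈ D, e ∈ pathEdges l :=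
  Multiset.mem_bind

theorem exists_isTraversal_of_mem_familyEnds {D : Multiset (List V)} {z : V}
    (hz : z ∈ familyEnds D) : ∃ l, IsTraversal D l ∧ l.head? = some z := by
  obtain ⟨l, hl, hzl⟩ := Multiset.mem_bind.1 hz
  rcases List.mem_append.1 hzl with h | h
  · exact ⟨l, .inl hl, by simpa using h⟩
  · exact ⟨l.reverse, .inr (by simpa using hl), by simpa using h⟩

theorem isTraversal_cons {D : Multiset (List V)} {l m : List V} :
    IsTraversal (l ::ₘ D) m ↔ m = l ∨ m = l.reverse ∨ IsTraversal D m := by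
  simp only [IsTraversal, Multiset.mem_cons, List.reverse_eq_iff]
  tauto

theorem isTraversal_reverse_cons {D : Multiset (List V)} {l m : List V} :
    IsTraversal (l.reverse ::ₘ D) m ↔ IsTraversal (l ::ₘ D) m := by
  simp only [isTraversal_cons, List.reverse_reverse]
  tauto

theorem IsTraversal.mem_familyEdges {D : Multiset (List V)} {r s : List V} {a y : V}
    (hl : IsTraversal D (r ++ a :: s)) (hr : r.getLast? = some y) : s(a, y) ∈ familyEdges D := by
  have hmem : s(a, y) ∈ pathEdges (r ++ a :: s) := by simp [pathEdges_append_cons hr]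
  rcases hl with hl | hl
  · exact _root_.mem_familyEdges.2 ⟨_, hl, hmem⟩
  · exact _root_.mem_familyEdges.2 ⟨_, hl, by rwa [pathEdges_reverse, List.mem_reverse]⟩

namespace IsPathFamily

variable {D : Multiset (List V)} {l : List V} {n : ℕ} {E : Multiset (Sym2 V)} {T : Multiset V}
  {a b x y : V}

theorem replace {l' : List V} {E' : Multiset (Sym2 V)} {T' : Multiset V}
    (hD : IsPathFamily (l ::ₘ D) n E T) (hl' : l'.Nodup ∧ 2 ≤ l'.length)
    (hE : (pathEdges l : Multiset (Sym2 V)) + E' = ↑(pathEdges l') + E)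
    (hT : pathEnds l + T' = pathEnds l' + T) : IsPathFamily (l' ::ₘ D) n E' T' where
  isPath := Multiset.forall_mem_cons.2 ⟨hl', (Multiset.forall_mem_cons.1 hD.isPath).2⟩
  card_eq := by rw [← hD.card_eq, Multiset.card_cons, Multiset.card_cons]
  edges_eq := by
    rw [← hD.edges_eq, familyEdges_cons, add_left_comm] at hE
    rw [familyEdges_cons, add_left_cancel hE]
  ends_eq := by
    rw [← hD.ends_eq, familyEnds_cons, add_left_comm] at hT
    rw [familyEnds_cons, add_left_cancel hT]

theorem isPath_head (hD : IsPathFamily (l ::ₘ D) n E T) : l.Nodup ∧ 2 ≤ l.length :=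
  hD.isPath l (Multiset.mem_cons_self l D)

theorem exists_cons_of_isTraversal (hD : IsPathFamily D n E T) (hl : IsTraversal D l) :
    ∃ D₀, IsPathFamily (l ::ₘ D₀) n E T ∧ ∀ m, IsTraversal D m → IsTraversal (l ::ₘ D₀) m := by
  rcases hl with hl | hl <;> obtain ⟨D₀, rfl⟩ := Multiset.exists_cons_of_mem hl
  · exact ⟨D₀, hD, fun _ => id⟩
  · refine ⟨D₀, hD.replace (by simpa using hD.isPath_head) ?_ ?_,
      fun m => isTraversal_reverse_cons.1⟩
    · rw [pathEdges_reverse, Multiset.coe_reverse]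
    · rw [pathEnds_reverse]

theorem cons_vertex (hD : IsPathFamily (l ::ₘ D) n E (x ::ₘ T)) (hlx : l.head? = some x)
    (ha : a ∉ l) : IsPathFamily ((a :: l) ::ₘ D) n (s(a, x) ::ₘ E) (a ::ₘ T) := by
  obtain ⟨t, rfl⟩ := List.head?_eq_some_iff.1 hlx
  refine hD.replace ⟨List.nodup_cons.2 ⟨ha, hD.isPath_head.1⟩, by simp⟩ ?_ ?_
  · rw [pathEdges_cons_cons, ← Multiset.cons_coe, Multiset.add_cons, Multiset.cons_add]
  · simp [pathEnds, ← Multiset.cons_coe, Multiset.cons_swap]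

theorem reverse_leg {r s : List V}
    (hD : IsPathFamily ((r ++ a :: s) ::ₘ D) n (s(a, y) ::ₘ E) (x ::ₘ T))
    (hrx : r.head? = some x) (hry : r.getLast? = some y) :
    IsPathFamily ((r.reverse ++ a :: s) ::ₘ D) n (s(a, x) ::ₘ E) (y ::ₘ T) := by
  have hperm : (r ++ a :: s).Perm (r.reverse ++ a :: s) := (List.reverse_perm r).symm.append_right _
  have hrx' : r.reverse.getLast? = some x := by simpa using hrx
  have hry' : r.reverse.head? = some y := by simpa using hry
  refine hD.replace ⟨hperm.nodup_iff.1 hD.isPath_head.1, hperm.length_eq ▸ hD.isPath_head.2⟩ ?_ ?_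
  · simp only [pathEdges_append_cons hry, pathEdges_append_cons hrx', pathEdges_reverse,
      ← Multiset.coe_add, ← Multiset.cons_coe, Multiset.coe_reverse, Multiset.add_cons,
      Multiset.cons_add]
    exact Multiset.cons_swap ..
  · simp only [pathEnds_append_cons hrx, pathEnds_append_cons hry', Multiset.add_cons,
      Multiset.cons_add]
    exact Multiset.cons_swap ..

/-- The vertex `y` drops out of `U` because its edge `ay` already serves the path that is changed,
so no other path enters `a` from `y`. -/
theorem hasLegVia_reverse_leg {r s : List V} {U : Set V} {z : V}
    (hD : IsPathFamily ((r ++ a :: s) ::ₘ D) n E T) (hE : E.Nodup) (hrx : r.head? = some x)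
    (hry : r.getLast? = some y) (hzx : z ≠ x) (hz : HasLegVia ((r ++ a :: s) ::ₘ D) a U z) :
    HasLegVia ((r.reverse ++ a :: s) ::ₘ D) a (U \ {y}) z := by
  obtain ⟨m, hm, hmz, hmU⟩ := hz
  rcases isTraversal_cons.1 hm with rfl | rfl | hmD
  · rw [List.head?_append, hrx] at hmz
    exact absurd (Option.some.inj hmz).symm hzx
  · obtain ⟨-, has, hdisj⟩ := List.nodup_append.1 hD.isPath_head.1
    have ha_s : a ∉ s.reverse := by simpa using (List.nodup_cons.1 has).1
    have ha_r : a ∉ r := fun h => hdisj a h a (by simp) rfl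
    refine ⟨(r.reverse ++ a :: s).reverse, isTraversal_cons.2 (.inr (.inl rfl)),
      by simpa [List.head?_append] using hmz, fun r' s' h => ?_⟩
    obtain ⟨y', hy', hsy'⟩ := hmU s.reverse r.reverse (by simp)
    have h' : s.reverse ++ a :: r = r' ++ a :: s' := by simpa using h
    obtain rfl : s.reverse = r' := ((List.append_cons_inj_of_notMem ha_s ha_r).1 h').1
    refine ⟨y', ⟨hy', ?_⟩, hsy'⟩
    rintro rfl
    have hys : y' ∈ s := by simpa using List.mem_of_getLast? hsy'
    exact hdisj y' (List.mem_of_getLast? hry) y' (List.mem_cons_of_mem _ hys) rfl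
  · refine ⟨m, isTraversal_cons.2 (.inr (.inr hmD)), hmz, ?_⟩
    rintro r' s' rfl
    obtain ⟨y', hy', hr'⟩ := hmU r' s' rfl
    refine ⟨y', ⟨hy', ?_⟩, hr'⟩
    rintro rfl
    rw [← hD.edges_eq, familyEdges_cons, Multiset.nodup_add, Multiset.disjoint_left] at hE
    exact hE.2.2 (by simp [pathEdges_append_cons hry]) (hmD.mem_familyEdges hr')

theorem exists_add_edge_of_hasLegVia {U : Set V} (hU : U.Finite) (hx : x ∉ U)
    (hD : IsPathFamily D n E (x ::ₘ T)) (hE : (s(a, x) ::ₘ E).Nodup)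
    (hlegs : ∀ z ∈ insert x U, HasLegVia D a U z) :
    ∃ D₂, IsPathFamily D₂ n (s(a, x) ::ₘ E) (a ::ₘ T) := by
  induction hk : U.ncard using Nat.strong_induction_on generalizing U x D E with | _ k ih
  obtain ⟨l, hlD, hlx, hl⟩ := hlegs x (.inl rfl)
  obtain ⟨D₀, hD₀, htraversal⟩ := hD.exists_cons_of_isTraversal hlD
  by_cases ha : a ∈ l
  · obtain ⟨r, s, rfl⟩ := List.append_of_mem ha
    obtain ⟨y, hyU, hry⟩ := hl r s rfl
    have hrx : r.head? = some x := by
      rwa [List.head?_append_of_ne_nil _ (by rintro rfl; simp at hry)] at hlx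
    have hyE : s(a, y) ∈ E := hD.edges_eq ▸ hlD.mem_familyEdges hry
    obtain ⟨E, rfl⟩ := Multiset.exists_cons_of_mem hyE
    rw [Multiset.cons_swap]
    refine ih _ (hk ▸ Set.ncard_sdiff_singleton_lt_of_mem hyU hU) hU.sdiff (by simp)
      (hD₀.reverse_leg hrx hry) (Multiset.cons_swap .. ▸ hE) (fun z hz => ?_) rfl
    have hzU : z ∈ U := Set.insert_sdiff_self_of_mem hyU ▸ hz
    obtain ⟨m, hm, hleg⟩ := hlegs z (.inr hzU)
    exact hD₀.hasLegVia_reverse_leg (Multiset.nodup_cons.1 hE).2 hrx hry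
      (ne_of_mem_of_not_mem hzU hx) ⟨m, htraversal m hm, hleg⟩
  · exact ⟨_, hD₀.cons_vertex hlx ha⟩

theorem exists_add_edge (hab : a ≠ b) (hD : IsPathFamily D n E (b ::ₘ T))
    (hE : (s(a, b) ::ₘ E).Nodup) (hnbr : ∀ z, s(a, z) ∈ E → z ∈ T) :
    ∃ D₂, IsPathFamily D₂ n (s(a, b) ::ₘ E) (a ::ₘ T) := by
  have hfin : {y | s(a, y) ∈ E}.Finite :=
    (Multiset.finite_toSet E).preimage (Sym2.mkEmbedding a).injective.injOn
  refine hD.exists_add_edge_of_hasLegVia hfin (Multiset.nodup_cons.1 hE).1 hE fun z hz => ?_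
  have hza : z ≠ a := by
    rintro rfl
    rcases hz with rfl | hz
    · exact hab rfl
    · obtain ⟨l, hl, hzl⟩ := mem_familyEdges.1 (hD.edges_eq ▸ hz)
      exact not_isDiag_of_mem_pathEdges (hD.isPath l hl).1 hzl rfl
  have hz_end : z ∈ familyEnds D :=
    hD.ends_eq ▸ Multiset.mem_cons.2 (hz.imp_right (hnbr z))
  obtain ⟨l, hl, hlz⟩ := exists_isTraversal_of_mem_familyEnds hz_end
  refine ⟨l, hl, hlz, ?_⟩
  rintro r s rfl
  obtain rfl | ⟨q, y, rfl⟩ := List.eq_nil_or_concat' r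
  · exact absurd (Option.some.inj hlz).symm hza
  · exact ⟨y, hD.edges_eq ▸ hl.mem_familyEdges (by simp), by simp⟩

theorem exists_add_edges {ι : Type*} {u v : ι → V} {A : Multiset ι} (huv : ∀ i ∈ A, u i ≠ v i)
    (hD : IsPathFamily D n E (A.map v + T)) (hE : (A.map (fun i => s(u i, v i)) + E).Nodup)
    (hnbr : ∀ i ∈ A, ∀ z, s(u i, z) ∈ A.map (fun i => s(u i, v i)) + E → z ≠ v i → z ∈ T) :
    ∃ D₂, IsPathFamily D₂ n (A.map (fun i => s(u i, v i)) + E) (A.map u + T) := by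
  induction A using Multiset.induction_on generalizing T with
  | empty => exact ⟨D, by simpa using hD⟩
  | cons j A ih =>
    simp only [Multiset.map_cons, Multiset.cons_add] at hD hE hnbr ⊢
    obtain ⟨hj, hE'⟩ := Multiset.nodup_cons.1 hE
    rw [← Multiset.add_cons] at hD
    obtain ⟨D₁, hD₁⟩ := ih (fun i hi => huv i (Multiset.mem_cons_of_mem hi)) hD hE'
      fun i hi z hz hzi => Multiset.mem_cons_of_mem
        (hnbr i (Multiset.mem_cons_of_mem hi) z (Multiset.mem_cons_of_mem hz) hzi)
    rw [Multiset.add_cons] at hD₁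
    refine hD₁.exists_add_edge (huv j (Multiset.mem_cons_self j A)) hE fun z hz =>
      Multiset.mem_add.2 (.inr ?_)
    exact hnbr j (Multiset.mem_cons_self j A) z (Multiset.mem_cons_of_mem hz)
      (ne_of_mem_of_not_mem hz hj <| congrArg _ ·)

end IsPathFamily

theorem familyEdges_coe_map_support {G : SimpleGraph V} (L : List (Σ a b : V, G.Walk a b)) :
    familyEdges ↑(L.map fun p => p.2.2.support) =
      (↑(L.flatMap fun p => p.2.2.edges) : Multiset (Sym2 V)) := by
  simp [familyEdges, Multiset.coe_bind, List.flatMap_map, pathEdges_support]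

namespace PathDecomp

variable {G : SimpleGraph V}

/-- The family of vertex lists of the paths of a path decomposition. -/
def family (D : PathDecomp G) : Multiset (List V) := ↑(D.paths.map fun p => p.2.2.support)

theorem isPathFamily (D : PathDecomp G) :
    IsPathFamily D.family (pdCard D) (familyEdges D.family) (familyEnds D.family) where
  isPath l hl := by
    obtain ⟨p, hp, rfl⟩ := List.mem_map.1 (Multiset.mem_coe.1 hl)
    have := D.nontrivial p hp
    exact ⟨(D.isPath p hp).support_nodup, by rw [Walk.length_support]; omega⟩
  card_eq := by simp [family, pdCard]
  edges_eq := rfl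
  ends_eq := rfl

theorem nodup_familyEdges (D : PathDecomp G) : (familyEdges D.family).Nodup := by
  rw [family, familyEdges_coe_map_support, Multiset.coe_nodup, List.nodup_flatMap]
  exact ⟨fun p hp => (D.isPath p hp).isTrail.edges_nodup,
    D.edgeDisjoint.imp fun h e he he' => h e he he'⟩

theorem mem_familyEdges_family (D : PathDecomp G) {e : Sym2 V} :
    e ∈ familyEdges D.family ↔ e ∈ G.edgeSet := by
  rw [family, familyEdges_coe_map_support, Multiset.mem_coe, List.mem_flatMap]
  exact ⟨fun ⟨p, _, he⟩ => p.2.2.edges_subset_edgeSet he, D.covers e⟩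

theorem fst_ne_of_mem_paths (D : PathDecomp G) {p : Σ a b : V, G.Walk a b} (hp : p ∈ D.paths) :
    p.1 ≠ p.2.1 := by
  obtain ⟨a, b, w⟩ := p
  intro (h : a = b)
  subst h
  exact (D.nontrivial _ hp).ne' (Walk.length_eq_zero_iff.2 (Walk.isPath_iff_nil.1 (D.isPath _ hp)))

theorem count_familyEnds [DecidableEq V] (D : PathDecomp G) (w : V) :
    (familyEnds D.family).count w = ends D w := by
  have hcount : ∀ p ∈ D.paths,
      (pathEnds p.2.2.support).count w = if p.1 = w ∨ p.2.1 = w then 1 else 0 := by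
    intro p hp
    have := D.fst_ne_of_mem_paths hp
    rw [pathEnds_support, Multiset.insert_eq_cons, Multiset.count_cons, Multiset.count_singleton]
    grind
  rw [ends, familyEnds, family, Multiset.count_bind, Multiset.map_coe, Multiset.sum_coe,
    List.map_map, List.map_congr_left (g := fun p => if p.1 = w ∨ p.2.1 = w then 1 else 0) hcount]
  induction D.paths with
  | nil => rfl
  | cons p L ih =>
    rw [List.map_cons, List.sum_cons, ih, List.filter_cons]
    split_ifs <;> simp_all [add_comm]

theorem mem_familyEnds_family [DecidableEq V] (D : PathDecomp G) {w : V} :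
    w ∈ familyEnds D.family ↔ ends D w ≠ 0 := by
  rw [← D.count_familyEnds, Multiset.count_ne_zero]

end PathDecomp

theorem exists_walks_of_isChain {G : SimpleGraph V} {D : Multiset (List V)}
    (hD : ∀ l ∈ D, l ≠ [] ∧ l.IsChain G.Adj) :
    ∃ L : List (Σ a b : V, G.Walk a b), ↑(L.map fun p => p.2.2.support) = D := by
  obtain ⟨L, hL⟩ : D.toList ∈ Set.range
      (List.map fun p : Σ a b : V, G.Walk a b => p.2.2.support) := by
    rw [Set.range_list_map]
    intro l hl
    obtain ⟨hne, hchain⟩ := hD l (Multiset.mem_toList.1 hl)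
    exact ⟨⟨_, _, Walk.ofSupport l hne hchain⟩, Walk.support_ofSupport hne hchain⟩
  exact ⟨L, by rw [hL, Multiset.coe_toList]⟩

theorem IsPathFamily.exists_family_eq {G : SimpleGraph V} {D : Multiset (List V)} {n : ℕ}
    {E : Multiset (Sym2 V)} {T : Multiset V} (hD : IsPathFamily D n E T) (hE : E.Nodup)
    (hEG : ∀ e, e ∈ E ↔ e ∈ G.edgeSet) : ∃ D₂ : PathDecomp G, D₂.family = D := by
  have hwalk : ∀ l ∈ D, l ≠ [] ∧ l.IsChain G.Adj := fun l hl =>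
    ⟨List.ne_nil_of_length_pos (by have := (hD.isPath l hl).2; omega),
      isChain_of_pathEdges_subset fun e he =>
        (hEG e).1 (hD.edges_eq ▸ mem_familyEdges.2 ⟨l, hl, he⟩)⟩
  obtain ⟨L, rfl⟩ := exists_walks_of_isChain hwalk
  have hL : ∀ p ∈ L, p.2.2.support.Nodup ∧ 2 ≤ p.2.2.support.length := fun p hp =>
    hD.isPath _ (Multiset.mem_coe.2 (List.mem_map_of_mem hp))
  obtain rfl := hD.edges_eq
  rw [familyEdges_coe_map_support, Multiset.coe_nodup, List.nodup_flatMap] at hE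
  simp only [familyEdges_coe_map_support, Multiset.mem_coe, List.mem_flatMap] at hEG
  refine ⟨⟨L, fun p hp => ?_, fun p hp => (Walk.isPath_def _).2 (hL p hp).1,
    hE.2.imp fun h e he he' => h he he', fun e => (hEG e).2⟩, rfl⟩
  have := (hL p hp).2
  rw [Walk.length_support] at this
  omega

section CountMap

variable {α β : Type*} [Fintype α] [DecidableEq β] {f : α → β}

theorem count_map_univ_apply (hf : Function.Injective f) (i : α) :
    (Finset.univ.val.map f).count (f i) = 1 :=
  Multiset.count_eq_one_of_mem (Finset.univ.nodup.map hf)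
    (Multiset.mem_map_of_mem f (Finset.mem_univ i))

theorem count_map_univ_of_forall_ne {b : β} (hf : ∀ i, f i ≠ b) :
    (Finset.univ.val.map f).count b = 0 :=
  Multiset.count_eq_zero.2 (by simpa using hf)

end CountMap

section AddEdges

variable {ι : Type*} {G : SimpleGraph V} {u v : ι → V}

theorem PathDecomp.exists_of_deleteEdges [Fintype ι] (hedge : ∀ i, G.Adj (u i) (v i))
    (hinj : Function.Injective fun i => s(u i, v i))
    (D' : PathDecomp (G.deleteEdges {e | ∃ i, e = s(u i, v i)})) {T : Multiset V}
    (hT : familyEnds D'.family = Finset.univ.val.map v + T)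
    (hnbr : ∀ i z, G.Adj (u i) z → z ≠ v i → z ∈ T) :
    ∃ D : PathDecomp G, pdCard D = pdCard D' ∧
      familyEnds D.family = Finset.univ.val.map u + T := by
  have hmem (e : Sym2 V) : e ∈ Finset.univ.val.map (fun i => s(u i, v i)) +
      familyEdges D'.family ↔ e ∈ G.edgeSet := by
    have hedges : (∃ i, e = s(u i, v i)) → e ∈ G.edgeSet := by
      rintro ⟨i, rfl⟩
      exact hedge i
    simp only [Multiset.mem_add, Multiset.mem_map, Finset.mem_val, Finset.mem_univ, true_and,
      D'.mem_familyEdges_family, edgeSet_deleteEdges, Set.mem_sdiff, Set.mem_ofPred_eq, eq_comm]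
    tauto
  have hnodup : (Finset.univ.val.map (fun i => s(u i, v i)) + familyEdges D'.family).Nodup := by
    refine Multiset.nodup_add.2 ⟨Finset.univ.nodup.map hinj, D'.nodup_familyEdges,
      Multiset.disjoint_left.2 fun he he' => ?_⟩
    obtain ⟨i, -, rfl⟩ := Multiset.mem_map.1 he
    rw [D'.mem_familyEdges_family, edgeSet_deleteEdges] at he'
    exact he'.2 ⟨i, rfl⟩
  obtain ⟨D₂, hD₂⟩ := (hT ▸ D'.isPathFamily).exists_add_edges (fun i _ => (hedge i).ne) hnodup
    fun i _ z hz => hnbr i z ((hmem _).1 hz)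
  obtain ⟨D, rfl⟩ := hD₂.exists_family_eq hnodup hmem
  exact ⟨D, D.isPathFamily.card_eq.symm.trans hD₂.card_eq, hD₂.ends_eq⟩

theorem PathDecomp.finite_of_one_le_ends [DecidableEq V] (D : PathDecomp G)
    (hv : Function.Injective v) (h : ∀ i, 1 ≤ ends D (v i)) : Finite ι := by
  have hmem (i : ι) : v i ∈ familyEnds D.family :=
    D.mem_familyEnds_family.2 (Nat.one_le_iff_ne_zero.1 (h i))
  exact Set.finite_univ_iff.1
    (((familyEnds D.family).finite_toSet.preimage hv.injOn).subset fun i _ => hmem i)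

theorem PathDecomp.exists_familyEnds_eq_map_add [DecidableEq V] [Fintype ι] (D : PathDecomp G)
    (hv : Function.Injective v) (h : ∀ i, 1 ≤ ends D (v i)) :
    ∃ T, familyEnds D.family = Finset.univ.val.map v + T := by
  refine Multiset.le_iff_exists_add.1
    ((Multiset.le_iff_subset (Finset.univ.nodup.map hv)).2 fun w hw => ?_)
  obtain ⟨i, -, rfl⟩ := Multiset.mem_map.1 hw
  exact D.mem_familyEnds_family.2 (Nat.one_le_iff_ne_zero.1 (h i))

theorem eq_of_adj_of_induced (hinj : Function.Injective (Sum.elim u v : ι ⊕ ι → V))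
    (hind : ∀ a b : V, (∃ i, a = u i ∨ a = v i) → (∃ i, b = u i ∨ b = v i) →
      G.Adj a b → ∃ i, (a = u i ∧ b = v i) ∨ (a = v i ∧ b = u i))
    (i j : ι) (h : G.Adj (u i) (v j)) : i = j := by
  obtain ⟨hu, hv, huv⟩ := Sum.elim_injective.1 hinj
  obtain ⟨l, ⟨hi, hj⟩ | ⟨hi, -⟩⟩ := hind _ _ ⟨i, .inl rfl⟩ ⟨j, .inr rfl⟩ h
  · exact (hu hi).trans (hv hj).symm
  · exact absurd hi (huv i l)

theorem induced_matching_lemma_general [DecidableEq V]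
    (hinj : Function.Injective (Sum.elim u v : ι ⊕ ι → V))
    (hedge : ∀ i, G.Adj (u i) (v i)) (hcross : ∀ i j, G.Adj (u i) (v j) → i = j)
    (D' : PathDecomp (G.deleteEdges {e | ∃ i, e = s(u i, v i)}))
    (h1 : ∀ i w, (G.deleteEdges {e | ∃ i, e = s(u i, v i)}).Adj (u i) w → ends D' w ≠ 0)
    (h2 : ∀ i, 1 ≤ ends D' (v i)) :
    ∃ D : PathDecomp G, pdCard D = pdCard D' ∧
      (∀ i, ends D (u i) = ends D' (u i) + 1) ∧
      (∀ i, ends D (v i) + 1 = ends D' (v i)) ∧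
      ∀ w, (∀ i, w ≠ u i ∧ w ≠ v i) → ends D w = ends D' w := by
  obtain ⟨hu, hv, huv⟩ := Sum.elim_injective.1 hinj
  have := D'.finite_of_one_le_ends hv h2
  have := Fintype.ofFinite ι
  obtain ⟨T, hT⟩ := D'.exists_familyEnds_eq_map_add hv h2
  have hnbr (i : ι) (z : V) (hz : G.Adj (u i) z) (hzi : z ≠ v i) : z ∈ T := by
    have hzv (j : ι) : v j ≠ z := by
      rintro rfl
      exact hzi (congrArg v (hcross i j hz).symm)
    have hz' : (G.deleteEdges {e | ∃ i, e = s(u i, v i)}).Adj (u i) z :=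
      deleteEdges_adj.2 ⟨hz, fun ⟨j, h⟩ => (Sym2.eq_iff.1 h).elim
        (fun h => hzv j h.2.symm) fun h => huv i j h.1⟩
    have hz_mem := D'.mem_familyEnds_family.2 (h1 i z hz')
    rw [hT, Multiset.mem_add] at hz_mem
    exact hz_mem.resolve_left (by simpa using hzv)
  have hinj_edges : Function.Injective fun i => s(u i, v i) := fun i j h =>
    (Sym2.eq_iff.1 h).elim (fun h => hu h.1) fun h => absurd h.1 (huv i j)
  obtain ⟨D, hcard, hends⟩ := D'.exists_of_deleteEdges hedge hinj_edges hT hnbr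
  have hcount (w : V) : ends D w + (Finset.univ.val.map v).count w =
      ends D' w + (Finset.univ.val.map u).count w := by
    rw [← D.count_familyEnds, ← D'.count_familyEnds, hends, hT, Multiset.count_add,
      Multiset.count_add]
    omega
  refine ⟨D, hcard, fun i => ?_, fun i => ?_, fun w hw => ?_⟩
  · simpa [count_map_univ_apply hu, count_map_univ_of_forall_ne fun j => (huv i j).symm]
      using hcount (u i)
  · simpa [count_map_univ_apply hv, count_map_univ_of_forall_ne fun j => huv j i]
      using hcount (v i)
  · simpa [count_map_univ_of_forall_ne fun i => (hw i).1.symm,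
      count_map_univ_of_forall_ne fun i => (hw i).2.symm] using hcount w

end AddEdges

theorem induced_matching_lemma [DecidableEq V] (G : SimpleGraph V) (k : ℕ)
    (u v : Fin k → V)
    (hinj : Function.Injective (Sum.elim u v : Fin k ⊕ Fin k → V))
    (hedge : ∀ i, G.Adj (u i) (v i))
    (hind : ∀ a b : V, (∃ i, a = u i ∨ a = v i) → (∃ i, b = u i ∨ b = v i) →
      G.Adj a b → ∃ i, (a = u i ∧ b = v i) ∨ (a = v i ∧ b = u i))
    (D' : PathDecomp (G.deleteEdges {e | ∃ i, e = s(u i, v i)}))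
    (h1 : ∀ i w, (G.deleteEdges {e | ∃ i, e = s(u i, v i)}).Adj (u i) w →
      ends D' w ≠ 0)
    (h2 : ∀ i, 1 ≤ ends D' (v i)) :
    ∃ D : PathDecomp G, pdCard D = pdCard D' ∧
      (∀ i, ends D (u i) = ends D' (u i) + 1) ∧
      (∀ i, ends D (v i) + 1 = ends D' (v i)) ∧
      ∀ w, (∀ i, w ≠ u i ∧ w ≠ v i) → ends D w = ends D' w :=
  induced_matching_lemma_general hinj hedge (eq_of_adj_of_induced hinj hind) D' h1 h2
end
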